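/- arXiv:2203.06738 — 2 statements merged into one kernel-verified Lean document; each statement's English description precedes it below -/
import Mathlib

section
/- Let X be a complex Banach space, T a bounded linear operator on X, and (M,N) ∈ Red(T) such that T_M is invertible, T_N is zeroloid, and σ(T_M) ∩ σ(T_N) = ∅. Then σ(T_N) \ {0} consists of isolated points of σ(T), and for every bounded operator S commuting with T, both M and N are S-invariant. -/
open Filter Set Function

variable {X : Type*} [NormedAddCommGroup X] [NormedSpace ℂ X] [CompleteSpace X]

/-- Accumulation points of a subset of `ℂ`. -/
def accSet (A : Set ℂ) : Set ℂ := {z : ℂ | AccPt z (Filter.principal A)}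

/-- `(M, N) ∈ Red(T)`: a pair of closed `T`-invariant subspaces with `X = M ⊕ N`. -/
def Red (T : X →L[ℂ] X) (M N : Submodule ℂ X) : Prop :=
  IsClosed (M : Set X) ∧ IsClosed (N : Set X) ∧ (∀ x ∈ M, T x ∈ M) ∧ (∀ x ∈ N, T x ∈ N) ∧
    IsCompl M N

open Classical in
/-- Restriction of `T` to a `T`-invariant subspace `M` (junk value `0` if `M` is not invariant). -/
noncomputable def restrictCLM (T : X →L[ℂ] X) (M : Submodule ℂ X) : M →L[ℂ] M :=
  if h : ∀ x ∈ M, T x ∈ M then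
    { toLinearMap := (T : X →ₗ[ℂ] X).restrict h
      cont := by exact (T.continuous.comp continuous_subtype_val).subtype_mk _ }
  else 0

/-- An operator is zeroloid if the accumulation points of its spectrum are contained in `{0}`. -/
def Zeroloid {Y : Type*} [NormedAddCommGroup Y] [NormedSpace ℂ Y] (S : Y →L[ℂ] Y) : Prop :=
  accSet (spectrum ℂ S) ⊆ {0}

theorem rosenblum_aux {E F : Type*} [NormedAddCommGroup E] [NormedSpace ℂ E] [CompleteSpace E]
    [NormedAddCommGroup F] [NormedSpace ℂ F] [CompleteSpace F]
    (B : E →L[ℂ] E) (D : F →L[ℂ] F) (A : E →L[ℂ] F)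
    (h : A.comp B = D.comp A) (hd : spectrum ℂ B ∩ spectrum ℂ D = ∅) : A = 0 := by
  classical
  let f : ℂ → (E →L[ℂ] F) := fun z =>
    if z ∈ resolventSet ℂ D then (resolvent D z).comp A else A.comp (resolvent B z)
  have hcomm : ∀ z : ℂ, (algebraMap ℂ (F →L[ℂ] F) z - D).comp A
      = A.comp (algebraMap ℂ (E →L[ℂ] E) z - B) := by
    intro z
    ext x
    have := congrArg (fun L => L x) h
    simp only [ContinuousLinearMap.comp_apply] at this
    simp [Algebra.algebraMap_eq_smul_one, this]
  have hDinv : ∀ z ∈ resolventSet ℂ D,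
      resolvent D z * (algebraMap ℂ (F →L[ℂ] F) z - D) = 1 := by
    intro z hz
    exact Ring.inverse_mul_cancel _ hz
  have hBinv : ∀ z ∈ resolventSet ℂ B,
      (algebraMap ℂ (E →L[ℂ] E) z - B) * resolvent B z = 1 := by
    intro z hz
    exact Ring.mul_inverse_cancel _ hz
  have hagree : ∀ z ∈ resolventSet ℂ D, z ∈ resolventSet ℂ B →
      (resolvent D z).comp A = A.comp (resolvent B z) := by
    intro z hz hz'
    calc (resolvent D z).comp A
        = (resolvent D z).comp (A.comp
            ((algebraMap ℂ (E →L[ℂ] E) z - B) * resolvent B z)) := by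
          rw [hBinv z hz']; rfl
      _ = (resolvent D z).comp ((A.comp (algebraMap ℂ (E →L[ℂ] E) z - B)).comp
            (resolvent B z)) := rfl
      _ = (resolvent D z * (algebraMap ℂ (F →L[ℂ] F) z - D)).comp
            (A.comp (resolvent B z)) := by rw [← hcomm]; rfl
      _ = A.comp (resolvent B z) := by rw [hDinv z hz]; rfl
  have hfD : ∀ z ∈ resolventSet ℂ D, f z = (resolvent D z).comp A := fun z hz => if_pos hz
  have hfB : ∀ z ∈ resolventSet ℂ B, f z = A.comp (resolvent B z) := by
    intro z hz
    by_cases hz' : z ∈ resolventSet ℂ D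
    · rw [hfD z hz', hagree z hz' hz]
    · exact if_neg hz'
  have hdiff : Differentiable ℂ f := by
    intro z
    by_cases hz : z ∈ resolventSet ℂ D
    · have h1 : DifferentiableAt ℂ (fun w => (resolvent D w).comp A) z :=
        (spectrum.hasDerivAt_resolvent_const_left hz).differentiableAt.clm_comp
          (differentiableAt_const A)
      refine h1.congr_of_eventuallyEq ?_
      filter_upwards [(spectrum.isOpen_resolventSet D).mem_nhds hz] with w hw using hfD w hw
    · have hz' : z ∈ resolventSet ℂ B := by
        by_contra hb
        have : z ∈ spectrum ℂ B ∩ spectrum ℂ D := ⟨hb, hz⟩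
        rw [hd] at this
        exact this
      have h1 : DifferentiableAt ℂ (fun w => A.comp (resolvent B w)) z :=
        (differentiableAt_const A).clm_comp
          (spectrum.hasDerivAt_resolvent_const_left hz').differentiableAt
      refine h1.congr_of_eventuallyEq ?_
      filter_upwards [(spectrum.isOpen_resolventSet B).mem_nhds hz'] with w hw using hfB w hw
  have hev : ∀ᶠ z in Bornology.cobounded ℂ, z ∈ resolventSet ℂ D := by
    have : (spectrum ℂ D)ᶜ ∈ Bornology.cobounded ℂ :=
      Bornology.isBounded_def.1 (spectrum.isBounded (𝕜 := ℂ) D)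
    filter_upwards [this] with z hz
    exact not_not.mp hz
  have hlim : Tendsto f (cocompact ℂ) (nhds 0) := by
    rw [← Metric.cobounded_eq_cocompact]
    have h1 : Tendsto (fun z => (resolvent D z).comp A) (Bornology.cobounded ℂ) (nhds 0) := by
      have := ((ContinuousLinearMap.compL ℂ E F F).flip A).continuous.tendsto 0
      have h2 := this.comp (spectrum.resolvent_tendsto_cobounded D (𝕜 := ℂ))
      simpa [Function.comp_def] using h2
    refine h1.congr' ?_
    filter_upwards [hev] with z hz using (hfD z hz).symm
  obtain ⟨z, hz⟩ := hev.exists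
  have h0 : (resolvent D z).comp A = 0 := by
    rw [← hfD z hz]; exact hdiff.apply_eq_of_tendsto_cocompact z hlim
  have hu : (algebraMap ℂ (F →L[ℂ] F) z - D) * resolvent D z = 1 :=
    Ring.mul_inverse_cancel _ hz
  calc A = ((algebraMap ℂ (F →L[ℂ] F) z - D) * resolvent D z).comp A := by rw [hu]; rfl
    _ = (algebraMap ℂ (F →L[ℂ] F) z - D).comp ((resolvent D z).comp A) := rfl
    _ = 0 := by rw [h0]; simp

theorem restrictCLM_coe_aux (T : X →L[ℂ] X) (M : Submodule ℂ X) (h : ∀ x ∈ M, T x ∈ M)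
    (x : M) : ((restrictCLM T M x : M) : X) = T x := by
  simp only [restrictCLM, dif_pos h]
  rfl

theorem mem_spectrum_aux {Y : Type*} [NormedAddCommGroup Y] [NormedSpace ℂ Y] [CompleteSpace Y]
    (T : Y →L[ℂ] Y) (z : ℂ) :
    z ∉ spectrum ℂ T ↔ Function.Bijective (fun x => z • x - T x) := by
  rw [spectrum.notMem_iff, ContinuousLinearMap.isUnit_iff_bijective]
  have : ⇑(algebraMap ℂ (Y →L[ℂ] Y) z - T) = fun x => z • x - T x := by
    ext x; simp [Algebra.algebraMap_eq_smul_one]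
  rw [this]

theorem isClosed_spectrum_aux {Y : Type*} [NormedAddCommGroup Y] [NormedSpace ℂ Y]
    [CompleteSpace Y] (T : Y →L[ℂ] Y) : IsClosed (spectrum ℂ T) :=
  spectrum.isClosed T

theorem spectrum_restrict_aux (T : X →L[ℂ] X) (M N : Submodule ℂ X) (hRed : Red T M N) :
    spectrum ℂ (restrictCLM T N) ⊆ spectrum ℂ T := by
  obtain ⟨hMc, hNc, hMi, hNi, hc⟩ := hRed
  haveI := hNc.completeSpace_coe
  intro z hz
  by_contra hzT
  refine absurd hz ?_
  rw [mem_spectrum_aux] at hzT ⊢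
  constructor
  · intro a b hab
    have := congrArg (fun t : N => (t : X)) hab
    simp only [Submodule.coe_sub, Submodule.coe_smul, restrictCLM_coe_aux T N hNi] at this
    exact Subtype.ext (hzT.1 this)
  · intro y
    obtain ⟨x, hx⟩ := hzT.2 (y : X)
    obtain ⟨m, hm, n, hn, rfl⟩ := Submodule.mem_sup.mp
      (hc.sup_eq_top ▸ Submodule.mem_top : x ∈ M ⊔ N)
    have h1 : z • m - T m ∈ M := M.sub_mem (M.smul_mem _ hm) (hMi m hm)
    have h2 : z • m - T m ∈ N := by
      have : z • m - T m = (y : X) - (z • n - T n) := by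
        rw [← hx]; simp only [smul_add, map_add]; abel
      rw [this]
      exact N.sub_mem y.2 (N.sub_mem (N.smul_mem _ hn) (hNi n hn))
    have h3 : z • m - T m = 0 := Submodule.disjoint_def.mp hc.disjoint _ h1 h2
    have h4 : m = 0 := hzT.1 (by simpa using h3)
    subst h4
    refine ⟨⟨n, hn⟩, Subtype.ext ?_⟩
    simpa [restrictCLM_coe_aux T N hNi] using hx

theorem spectrum_union_aux (T : X →L[ℂ] X) (M N : Submodule ℂ X) (hRed : Red T M N) :
    spectrum ℂ T ⊆ spectrum ℂ (restrictCLM T M) ∪ spectrum ℂ (restrictCLM T N) := by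
  obtain ⟨hMc, hNc, hMi, hNi, hc⟩ := hRed
  haveI := hNc.completeSpace_coe
  haveI := hMc.completeSpace_coe
  intro z hz
  by_contra hzU
  rw [Set.mem_union, not_or, mem_spectrum_aux, mem_spectrum_aux] at hzU
  obtain ⟨hzM, hzN⟩ := hzU
  refine absurd hz ?_
  rw [mem_spectrum_aux]
  constructor
  · have key : ∀ x : X, z • x - T x = 0 → x = 0 := by
      intro x hx
      obtain ⟨m, hm, n, hn, rfl⟩ := Submodule.mem_sup.mp
        (hc.sup_eq_top ▸ Submodule.mem_top : x ∈ M ⊔ N)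
      have h1 : z • m - T m ∈ M := M.sub_mem (M.smul_mem _ hm) (hMi m hm)
      have hn1 : z • n - T n ∈ N := N.sub_mem (N.smul_mem _ hn) (hNi n hn)
      have hs : (z • m - T m) + (z • n - T n) = 0 := by
        rw [← hx]; simp only [smul_add, map_add]; abel
      have h2 : z • m - T m ∈ N := by
        rw [eq_neg_of_add_eq_zero_left hs]; exact N.neg_mem hn1
      have h3 : z • m - T m = 0 := Submodule.disjoint_def.mp hc.disjoint _ h1 h2
      have h4 : z • n - T n = 0 := by rw [h3, zero_add] at hs; exact hs
      have h5 : (⟨m, hm⟩ : M) = 0 := hzM.1 (Subtype.ext (by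
        simpa [restrictCLM_coe_aux T M hMi] using h3))
      have h6 : (⟨n, hn⟩ : N) = 0 := hzN.1 (Subtype.ext (by
        simpa [restrictCLM_coe_aux T N hNi] using h4))
      have h7 : m = 0 := congrArg Subtype.val h5
      have h8 : n = 0 := congrArg Subtype.val h6
      rw [h7, h8, add_zero]
    intro a b hab
    refine sub_eq_zero.mp (key _ ?_)
    have hab' : z • a - T a = z • b - T b := hab
    have : z • (a - b) - T (a - b) = (z • a - T a) - (z • b - T b) := by
      simp only [smul_sub, map_sub]; abel
    rw [this, hab', sub_self]
  · intro y
    obtain ⟨m, hm, n, hn, rfl⟩ := Submodule.mem_sup.mp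
      (hc.sup_eq_top ▸ Submodule.mem_top : y ∈ M ⊔ N)
    obtain ⟨a, ha⟩ := hzM.2 ⟨m, hm⟩
    obtain ⟨b, hb⟩ := hzN.2 ⟨n, hn⟩
    have ha' := congrArg Subtype.val ha
    have hb' := congrArg Subtype.val hb
    simp only [Submodule.coe_sub, Submodule.coe_smul, restrictCLM_coe_aux T N hNi,
      restrictCLM_coe_aux T M hMi] at ha' hb'
    refine ⟨(a : X) + b, ?_⟩
    simp only [smul_add, map_add]
    rw [← ha', ← hb']; abel

theorem invariant_aux (T : X →L[ℂ] X) (M N : Submodule ℂ X) (hRed : Red T M N)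
    (hdisj : spectrum ℂ (restrictCLM T M) ∩ spectrum ℂ (restrictCLM T N) = ∅)
    (S : X →L[ℂ] X) (hS : S * T = T * S) : ∀ x ∈ M, S x ∈ M := by
  obtain ⟨hMc, hNc, hMi, hNi, hc⟩ := hRed
  haveI := hNc.completeSpace_coe
  haveI := hMc.completeSpace_coe
  let P : X →L[ℂ] N := N.linearProjOfClosedCompl M hc.symm hNc hMc
  have hPN : ∀ n : N, P n = n := fun n => Submodule.projectionOnto_apply_left hc.symm n
  have hP0 : ∀ x, P x = 0 ↔ x ∈ M := fun x => Submodule.projectionOnto_apply_eq_zero_iff hc.symm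
  have hPT : ∀ x, P (T x) = restrictCLM T N (P x) := by
    intro x
    obtain ⟨m, hm, n, hn, rfl⟩ := Submodule.mem_sup.mp
      (hc.sup_eq_top ▸ Submodule.mem_top : x ∈ M ⊔ N)
    have e1 : P (T m) = 0 := (hP0 _).2 (hMi m hm)
    have e2 : P m = 0 := (hP0 _).2 hm
    have e3 : P n = ⟨n, hn⟩ := hPN ⟨n, hn⟩
    have e4 : P (T n) = ⟨T n, hNi n hn⟩ := hPN ⟨T n, hNi n hn⟩
    simp only [map_add, e1, e2, e3, e4, zero_add, map_zero]
    exact Subtype.ext (restrictCLM_coe_aux T N hNi ⟨n, hn⟩).symm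
  have hA := rosenblum_aux (restrictCLM T M) (restrictCLM T N) (P.comp (S.comp M.subtypeL))
    (by
      ext1 x
      simp only [ContinuousLinearMap.comp_apply, Submodule.subtypeL_apply]
      rw [restrictCLM_coe_aux T M hMi, ← hPT]
      exact congrArg (fun L : X →L[ℂ] X => P (L x)) hS) hdisj
  intro x hx
  rw [← hP0]
  exact congrArg (fun L : M →L[ℂ] N => L ⟨x, hx⟩) hA

/-- If `(M,N) ∈ Red(T)` with `T_M` invertible, `T_N` zeroloid and
`σ(T_M) ∩ σ(T_N) = ∅`, then `σ(T_N) \ {0}` consists of isolated points of `σ(T)` and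
both `M` and `N` are invariant under every operator commuting with `T`. -/
theorem isolated_and_hyperinvariant (T : X →L[ℂ] X) (M N : Submodule ℂ X)
    (hRed : Red T M N) (hM : Function.Bijective (restrictCLM T M))
    (hN : Zeroloid (restrictCLM T N))
    (hdisj : spectrum ℂ (restrictCLM T M) ∩ spectrum ℂ (restrictCLM T N) = ∅) :
    spectrum ℂ (restrictCLM T N) \ {0} ⊆ spectrum ℂ T \ accSet (spectrum ℂ T) ∧
      ∀ S : X →L[ℂ] X, S * T = T * S → (∀ x ∈ M, S x ∈ M) ∧ (∀ x ∈ N, S x ∈ N) := by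
  obtain ⟨hMc, hNc, hMi, hNi, hc⟩ := id hRed
  haveI := hNc.completeSpace_coe
  haveI := hMc.completeSpace_coe
  have hRed' : Red T N M := ⟨hNc, hMc, hNi, hMi, hc.symm⟩
  refine ⟨?_, fun S hS => ⟨invariant_aux T M N hRed hdisj S hS,
    invariant_aux T N M hRed' (by rw [Set.inter_comm]; exact hdisj) S hS⟩⟩
  rintro z ⟨hz, hz0⟩
  refine ⟨spectrum_restrict_aux T M N hRed hz, fun hacc => ?_⟩
  have h1 : AccPt z (Filter.principal
      (spectrum ℂ (restrictCLM T M) ∪ spectrum ℂ (restrictCLM T N))) :=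
    AccPt.mono hacc (Filter.principal_mono.2 (spectrum_union_aux T M N hRed))
  rw [← Filter.sup_principal, accPt_sup] at h1
  rcases h1 with h1 | h1
  · have hcl : IsClosed (spectrum ℂ (restrictCLM T M)) :=
      isClosed_spectrum_aux (restrictCLM T M)
    have h3 : ClusterPt z (Filter.principal (spectrum ℂ (restrictCLM T M))) := h1.clusterPt
    have h2 : z ∈ spectrum ℂ (restrictCLM T M) := by
      rw [← hcl.closure_eq]
      exact mem_closure_iff_clusterPt.2 h3
    have : z ∈ spectrum ℂ (restrictCLM T M) ∩ spectrum ℂ (restrictCLM T N) := ⟨h2, hz⟩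
    rw [hdisj] at this
    exact this
  · exact hz0 (hN h1)
end

section
/- Let X be a complex Banach space, T a bounded linear operator on X, and Q a quasi-nilpotent bounded operator commuting with T. Then σ_{g_zd}(T) = σ_{g_zd}(T + Q); that is, for every λ ∈ ℂ, T − λI is g_z-invertible if and only if T + Q − λI is g_z-invertible. -/
open Filter Set Function

variable {X : Type*} [NormedAddCommGroup X] [NormedSpace ℂ X] [CompleteSpace X]

/-- `T` is `g_z`-invertible: it is the direct sum of an invertible operator and a zeroloid one. -/
def GzInvertible (T : X →L[ℂ] X) : Prop :=
  ∃ M N : Submodule ℂ X, Red T M N ∧ Function.Bijective (restrictCLM T M) ∧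
    Zeroloid (restrictCLM T N)

/-- An operator is quasi-nilpotent if its spectrum is contained in `{0}`. -/
def QuasiNilpotent {Y : Type*} [NormedAddCommGroup Y] [NormedSpace ℂ Y]
    (S : Y →L[ℂ] Y) : Prop :=
  spectrum ℂ S ⊆ {0}


section BanachAlg
variable {A : Type*} [NormedRing A] [NormedAlgebra ℂ A] [CompleteSpace A]

theorem gz_circle_mul_left {f : ℂ → A} {R : ℝ} (c : A) (hf : CircleIntegrable f 0 R) :
    c * circleIntegral f 0 R = circleIntegral (fun z => c * f z) 0 R := by
  have := ((ContinuousLinearMap.mul ℂ A) c).intervalIntegral_comp_comm hf.out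
  simp only [ContinuousLinearMap.mul_apply', mul_smul_comm] at this
  exact this.symm

theorem gz_circle_mul_right {f : ℂ → A} {R : ℝ} (c : A) (hf : CircleIntegrable f 0 R) :
    circleIntegral f 0 R * c = circleIntegral (fun z => f z * c) 0 R := by
  have := ((ContinuousLinearMap.mul ℂ A).flip c).intervalIntegral_comp_comm hf.out
  simp only [ContinuousLinearMap.flip_apply, ContinuousLinearMap.mul_apply', smul_mul_assoc] at this
  exact this.symm

/-- Laurent coefficients of the resolvent. -/
noncomputable def gzJ (a : A) (R : ℝ) (k : ℤ) : A :=
  (2 * Real.pi * Complex.I : ℂ)⁻¹ • circleIntegral (fun z => z ^ k • resolvent a z) 0 R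

theorem gz_diff {a : A} {z : ℂ} (hz : z ∉ spectrum ℂ a) (h0 : z ≠ 0) (k : ℤ) :
    DifferentiableAt ℂ (fun z => z ^ k • resolvent a z) z := by
  have h1 : DifferentiableAt ℂ (resolvent a) z :=
    (spectrum.hasDerivAt_resolvent_const_left (by simpa [spectrum] using hz)).differentiableAt
  exact (differentiableAt_zpow.2 (Or.inl h0)).smul h1

theorem gz_cont {a : A} {R : ℝ} (hR : 0 < R) (h : ∀ z : ℂ, ‖z‖ = R → z ∉ spectrum ℂ a) (k : ℤ) :
    ContinuousOn (fun z : ℂ => z ^ k • resolvent a z) (Metric.sphere 0 R) := by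
  intro z hz
  have hz' : ‖z‖ = R := by simpa using hz
  refine (gz_diff (h z hz') ?_ k).continuousAt.continuousWithinAt
  rintro rfl
  simp at hz'
  exact hR.ne hz'

theorem gz_int {a : A} {R : ℝ} (hR : 0 < R) (h : ∀ z : ℂ, ‖z‖ = R → z ∉ spectrum ℂ a) (k : ℤ) :
    CircleIntegrable (fun z => z ^ k • resolvent a z) 0 R :=
  (gz_cont hR h k).circleIntegrable hR.le

theorem gz_commute {a c : A} {R : ℝ} (hR : 0 < R) (h : ∀ z : ℂ, ‖z‖ = R → z ∉ spectrum ℂ a)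
    (k : ℤ) (hc : Commute a c) : Commute (gzJ a R k) c := by
  refine Commute.smul_left ?_ _
  show _ * _ = _ * _
  rw [gz_circle_mul_left _ (gz_int hR h k), gz_circle_mul_right _ (gz_int hR h k)]
  congr 1
  ext z
  have : Commute (resolvent a z) c := by
    unfold resolvent
    have h3 : Commute c (algebraMap ℂ A z - a) :=
      ((show Commute (algebraMap ℂ A z) c from Algebra.commutes z c).sub_left hc).symm
    by_cases hu : IsUnit (algebraMap ℂ A z - a)
    · obtain ⟨u, hu⟩ := hu
      rw [← hu, Ring.inverse_unit]
      rw [← hu] at h3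
      exact h3.units_inv_right.symm
    · rw [Ring.inverse_non_unit _ hu]
      exact Commute.zero_left c
  simp [this.eq]

theorem gz_rec {a : A} {R : ℝ} (hR : 0 < R) (h : ∀ z : ℂ, ‖z‖ = R → z ∉ spectrum ℂ a)
    (k : ℤ) : a * gzJ a R k = gzJ a R (k + 1) - (if k = -1 then 1 else 0) := by
  unfold gzJ
  rw [mul_smul_comm, gz_circle_mul_left _ (gz_int hR h k)]
  have hne : ∀ z : ℂ, z ∈ Metric.sphere (0:ℂ) R → z ≠ 0 := by
    rintro z hz rfl
    simp at hz
    exact hR.ne hz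
  have e : circleIntegral (fun z => a * (z ^ k • resolvent a z)) 0 R =
      circleIntegral (fun z => z ^ (k+1) • resolvent a z - z ^ k • (1 : A)) 0 R := by
    refine circleIntegral.integral_congr hR.le fun z hz => ?_
    have hu : IsUnit (algebraMap ℂ A z - a) := by
      have := h z (by simpa using hz)
      simpa [spectrum, resolventSet] using this
    have h1 : (algebraMap ℂ A z - a) * resolvent a z = 1 := Ring.mul_inverse_cancel _ hu
    have h2 : a * resolvent a z = z • resolvent a z - 1 := by
      rw [← h1, sub_mul, Algebra.smul_def]; abel
    show a * (z ^ k • resolvent a z) = z ^ (k+1) • resolvent a z - z ^ k • (1 : A)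
    rw [mul_smul_comm, h2, smul_sub, smul_smul, zpow_add_one₀ (hne z hz)]
  have ci : CircleIntegrable (fun z : ℂ => z ^ k • (1 : A)) 0 R := by
    refine ContinuousOn.circleIntegrable hR.le fun z hz => ?_
    exact ((differentiableAt_zpow.2 (Or.inl (hne z hz))).smul_const (1:A)).continuousAt.continuousWithinAt
  rw [e, circleIntegral.integral_sub (gz_int hR h _) ci, smul_sub]
  congr 1
  rw [circleIntegral.integral_smul_const, smul_smul]
  split_ifs with hk
  · subst hk
    have := circleIntegral.integral_sub_center_inv (0:ℂ) hR.ne'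
    simp only [sub_zero] at this
    simp only [zpow_neg_one, this]
    rw [inv_mul_cancel₀ Complex.two_pi_I_ne_zero, one_smul]
  · have := circleIntegral.integral_sub_zpow_of_ne hk (0:ℂ) (0:ℂ) R
    simp only [sub_zero] at this
    simp [this]

theorem gz_bound {a : A} {R : ℝ} (hR : 0 < R) (h : ∀ z : ℂ, ‖z‖ = R → z ∉ spectrum ℂ a) :
    ∃ C : ℝ, 0 ≤ C ∧ ∀ k : ℤ, ‖gzJ a R k‖ ≤ C * R ^ k := by
  obtain ⟨C, hC⟩ := (isCompact_sphere (0:ℂ) R).exists_bound_of_continuousOn (gz_cont hR h 0)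
  refine ⟨R * |C|, by positivity, fun k => ?_⟩
  rw [mul_assoc]
  refine circleIntegral.norm_two_pi_i_inv_smul_integral_le_of_norm_le_const hR.le fun z hz => ?_
  have h1 := hC z hz
  have h2 : ‖z‖ = R := by simpa using hz
  simp only [zpow_zero, one_smul] at h1
  rw [norm_smul, norm_zpow, h2, mul_comm]
  gcongr
  exact h1.trans (le_abs_self C)

theorem gz_radius {a : A} {r s : ℝ} (hr : 0 < r) (hrs : r < s)
    (h : ∀ z : ℂ, r ≤ ‖z‖ → ‖z‖ ≤ s → z ∉ spectrum ℂ a) (k : ℤ) : gzJ a s k = gzJ a r k := by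
  unfold gzJ
  congr 1
  refine Complex.circleIntegral_eq_of_differentiable_on_annulus_off_countable hr hrs.le
    countable_empty ?_ ?_
  · intro z hz
    simp at hz
    exact (gz_diff (h z hz.2 hz.1) (norm_pos_iff.1 (hr.trans_le hz.2)) k).continuousAt.continuousWithinAt
  · intro z hz
    simp at hz
    exact gz_diff (h z hz.2.le hz.1.le) (norm_pos_iff.1 (hr.trans hz.2)) k

theorem gz_riesz {a : A} {r s : ℝ} (hr : 0 < r) (hrs : r < s)
    (h : ∀ z : ℂ, r ≤ ‖z‖ → ‖z‖ ≤ s → z ∉ spectrum ℂ a) :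
    ∃ p b : A, p * p = p ∧ (∀ c, Commute a c → Commute p c) ∧ (∀ c, Commute a c → Commute b c) ∧
      1 - p = a * b ∧ ∃ C : ℝ, ∀ k : ℕ, ‖a ^ k * p‖ ≤ C * r ^ k := by
  have hr' : ∀ z : ℂ, ‖z‖ = r → z ∉ spectrum ℂ a := fun z hz => h z hz.ge (hz.le.trans hrs.le)
  have hs' : ∀ z : ℂ, ‖z‖ = s → z ∉ spectrum ℂ a := fun z hz => h z (hrs.le.trans hz.ge) hz.le
  have hs : 0 < s := hr.trans hrs
  obtain ⟨C, hC0, hC⟩ := gz_bound hr hr'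
  obtain ⟨D, hD0, hD⟩ := gz_bound hs hs'
  have key := fun k => gz_rec hr hr' k
  have hpos : ∀ k : ℕ, a ^ k * gzJ a r 0 = gzJ a r k := by
    intro k
    induction k with
    | zero => simp
    | succ k ih =>
      rw [pow_succ', mul_assoc, ih, key, if_neg (by omega)]
      simp
  have hneg : ∀ k : ℕ, a ^ k * gzJ a r (-(k + 1 : ℕ)) = gzJ a r (-1) := by
    intro k
    induction k with
    | zero => simp
    | succ k ih =>
      rw [pow_succ, mul_assoc, key, if_neg (by push_cast; omega), ← ih, sub_zero]
      congr 2
  have h1p : 1 - gzJ a r 0 = a * (-gzJ a r (-1)) := by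
    rw [mul_neg, key]; simp
  have hp : ∀ c, Commute a c → Commute (gzJ a r 0) c := fun c hc => gz_commute hr hr' 0 hc
  have hz : gzJ a r 0 * (1 - gzJ a r 0) = 0 := by
    have hb : ∀ k : ℕ, ‖gzJ a r 0 * (1 - gzJ a r 0)‖ ≤ C * D * (r / s) ^ (k + 1) := by
      intro k
      have e : gzJ a r 0 * (1 - gzJ a r 0) = -(gzJ a r ((k + 1 : ℕ)) * gzJ a s (-(k+1 : ℕ))) := by
        rw [gz_radius hr hrs h, ← hpos, h1p, ← hneg k, ← mul_neg, ← mul_neg, ← mul_assoc a, ← pow_succ',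
          ← mul_assoc, (hp _ ((Commute.refl a).pow_right (k+1))).eq]
      rw [e, norm_neg]
      refine (norm_mul_le _ _).trans ?_
      refine (mul_le_mul (hC _) (hD _) (norm_nonneg _) (by positivity)).trans (le_of_eq ?_)
      rw [zpow_neg, zpow_natCast, zpow_natCast, div_pow]
      ring
    have ht : Tendsto (fun k : ℕ => C * D * (r / s) ^ (k + 1)) atTop (nhds 0) := by
      have := (tendsto_pow_atTop_nhds_zero_of_lt_one (by positivity) ((div_lt_one hs).2 hrs)).comp
        (tendsto_add_atTop_nat 1)
      simpa using this.const_mul (C * D)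
    exact norm_le_zero_iff.1 (ge_of_tendsto' ht hb)
  refine ⟨gzJ a r 0, -gzJ a r (-1), ?_, hp, fun c hc => (gz_commute hr hr' _ hc).neg_left, h1p, C,
    fun k => ?_⟩
  · rw [mul_sub, mul_one, sub_eq_zero] at hz
    exact hz.symm
  · rw [hpos]
    simpa using hC k

theorem gz_unit_add {a q : A} (hq : spectrum ℂ q ⊆ {0}) (hc : Commute a q) (ha : IsUnit a) :
    IsUnit (a + q) := by
  obtain ⟨u, rfl⟩ := ha
  set b : A := ↑u⁻¹ with hb
  have hbq : Commute b q := hc.units_inv_left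
  have hrad : spectralRadius ℂ q = 0 := by
    unfold spectralRadius
    simp only [ENNReal.iSup_eq_zero]
    intro z hz
    simpa using hq hz
  have ht := spectrum.pow_norm_pow_one_div_tendsto_nhds_spectralRadius q
  rw [hrad] at ht
  have hε : (0 : ENNReal) < ENNReal.ofReal (1 / (‖b‖ + 1)) := by
    rw [ENNReal.ofReal_pos]; positivity
  obtain ⟨n, hn, hn1⟩ := ((ht.eventually (gt_mem_nhds hε)).and (eventually_ge_atTop 1)).exists
  have hB : (0:ℝ) < ‖b‖ + 1 := by positivity
  rw [ENNReal.ofReal_lt_ofReal_iff (by positivity)] at hn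
  have hn0 : (n:ℝ) ≠ 0 := by positivity
  have h2 : ‖q ^ n‖ < (1 / (‖b‖ + 1)) ^ n := by
    have := pow_lt_pow_left₀ hn (by positivity) (by omega : n ≠ 0)
    rwa [← Real.rpow_natCast, ← Real.rpow_mul (norm_nonneg _), one_div_mul_cancel hn0,
      Real.rpow_one] at this
  have h3 : ‖(-(b * q)) ^ n‖ < 1 := by
    have e : ‖(-(b * q)) ^ n‖ = ‖b ^ n * q ^ n‖ := by
      rw [neg_pow, hbq.mul_pow]
      rcases neg_one_pow_eq_or A n with h | h <;> simp [h]
    rw [e]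
    calc _ ≤ ‖b ^ n‖ * ‖q ^ n‖ := norm_mul_le _ _
      _ ≤ ‖b‖ ^ n * ‖q ^ n‖ := by
        gcongr; exact norm_pow_le' b (by omega)
      _ ≤ (‖b‖ + 1) ^ n * ‖q ^ n‖ := by gcongr; linarith
      _ < (‖b‖ + 1) ^ n * (1 / (‖b‖ + 1)) ^ n := by gcongr
      _ = 1 := by rw [← mul_pow, mul_one_div_cancel hB.ne', one_pow]
  have h4 : IsUnit (1 - (-(b * q)) ^ n) := isUnit_one_sub_of_norm_lt_one h3
  have h5 : IsUnit (1 - (-(b * q))) := by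
    rw [← mul_neg_geom_sum] at h4
    refine ((Commute.isUnit_mul_iff ?_).1 h4).1
    refine (Commute.sum_right _ _ _ fun i _ => ?_)
    exact ((Commute.one_left _).sub_left (Commute.refl _)).pow_right _
  have e : (u : A) + q = u * (1 - (-(b * q))) := by
    rw [sub_neg_eq_add, mul_add, mul_one, hb, Units.mul_inv_cancel_left]
  rw [e]
  exact u.isUnit.mul h5

theorem gz_spec_add_subset {a q : A} (hq : spectrum ℂ q ⊆ {0}) (hc : Commute a q) :
    spectrum ℂ (a + q) ⊆ spectrum ℂ a := by
  intro z hz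
  by_contra hn
  have hu : IsUnit (algebraMap ℂ A z - a) := by simpa [spectrum, resolventSet] using hn
  apply hz
  have h1 : spectrum ℂ (-q) ⊆ {0} := by
    rw [← spectrum.neg_eq]
    intro w hw
    simpa using hq hw
  have := gz_unit_add h1 ((show Commute (algebraMap ℂ A z) q from Algebra.commutes z q).sub_left hc).neg_right hu
  show IsUnit _
  convert this using 1
  abel

theorem gz_spec_add {a q : A} (hq : spectrum ℂ q ⊆ {0}) (hc : Commute a q) :
    spectrum ℂ (a + q) = spectrum ℂ a := by
  refine (gz_spec_add_subset hq hc).antisymm ?_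
  have h1 : spectrum ℂ (-q) ⊆ {0} := by
    rw [← spectrum.neg_eq]
    intro w hw
    simpa using hq hw
  have := gz_spec_add_subset (a := a + q) h1 ((hc.add_left (Commute.refl q)).neg_right)
  simpa using this

theorem gz_spec_norm {a : A} {C r : ℝ} (hr : 0 < r) (hC : ∀ k : ℕ, ‖a ^ k‖ ≤ C * r ^ k)
    {z : ℂ} (hz : z ∈ spectrum ℂ a) : ‖z‖ ≤ r := by
  by_contra hlt
  push Not at hlt
  have hb : ∀ k : ℕ, (‖z‖ / r) ^ k ≤ C * ‖(1 : A)‖ := by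
    intro k
    have h1 := spectrum.norm_le_norm_mul_of_mem (spectrum.pow_mem_pow _ k hz)
    rw [norm_pow] at h1
    rw [div_pow, div_le_iff₀ (by positivity)]
    have h2 := mul_le_mul_of_nonneg_right (hC k) (norm_nonneg (1 : A))
    linarith
  obtain ⟨k, hk⟩ := pow_unbounded_of_one_lt (C * ‖(1 : A)‖) ((one_lt_div hr).2 hlt)
  exact absurd (hb k) (not_le.2 hk)

theorem gz_spec_nhds {a : A} (h0 : IsUnit a) :
    ∃ ε > 0, ∀ z : ℂ, ‖z‖ < ε → z ∉ spectrum ℂ a := by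
  have ho : IsOpen (spectrum ℂ a)ᶜ := (spectrum.isClosed _).isOpen_compl
  obtain ⟨ε, hε, hsub⟩ := Metric.isOpen_iff.1 ho 0 ((spectrum.zero_notMem_iff ℂ).2 h0)
  exact ⟨ε, hε, fun z hz => hsub (by simpa using hz)⟩

theorem gz_acc_mem {a : A} {z : ℂ} (hz : AccPt z (Filter.principal (spectrum ℂ a))) :
    z ∈ spectrum ℂ a := by
  have hcl : z ∈ closure (spectrum ℂ a) := mem_closure_iff_clusterPt.2 hz.clusterPt
  rwa [(spectrum.isClosed _).closure_eq] at hcl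
end BanachAlg

theorem gz_restrict_apply {T : X →L[ℂ] X} {M : Submodule ℂ X} (h : ∀ x ∈ M, T x ∈ M) (x : M) :
    (restrictCLM T M x : X) = T x := by
  unfold restrictCLM
  rw [dif_pos h]
  rfl

theorem gz_mem_spec_iff {Y : Type*} [NormedAddCommGroup Y] [NormedSpace ℂ Y] [CompleteSpace Y]
    (S : Y →L[ℂ] Y) (z : ℂ) :
    z ∉ spectrum ℂ S ↔ Function.Bijective (algebraMap ℂ (Y →L[ℂ] Y) z - S) := by
  rw [← ContinuousLinearMap.isUnit_iff_bijective]
  simp [spectrum, resolventSet]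

theorem gz_alg_apply {Y : Type*} [NormedAddCommGroup Y] [NormedSpace ℂ Y]
    (S : Y →L[ℂ] Y) (z : ℂ) (y : Y) : (algebraMap ℂ (Y →L[ℂ] Y) z - S) y = z • y - S y := by
  simp [Algebra.algebraMap_eq_smul_one]

theorem gz_acc_norm {Y : Type*} [NormedAddCommGroup Y] [NormedSpace ℂ Y] [CompleteSpace Y]
    (S : Y →L[ℂ] Y) {C r : ℝ} (hr : 0 < r) (hC : ∀ k : ℕ, ‖S ^ k‖ ≤ C * r ^ k)
    (z : ℂ) (hz : z ∈ accSet (spectrum ℂ S)) : ‖z‖ ≤ r :=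
  gz_spec_norm hr hC (gz_acc_mem hz)

theorem gz_spec_union {T : X →L[ℂ] X} {M N : Submodule ℂ X} (h : Red T M N) {z : ℂ}
    (h1 : z ∉ spectrum ℂ (restrictCLM T M)) (h2 : z ∉ spectrum ℂ (restrictCLM T N)) :
    z ∉ spectrum ℂ T := by
  obtain ⟨hM, hN, iM, iN, hc⟩ := h
  have : CompleteSpace M := hM.completeSpace_coe
  have : CompleteSpace N := hN.completeSpace_coe
  rw [gz_mem_spec_iff] at *
  have split : ∀ x : X, ∃ m : M, ∃ n : N, (m : X) + n = x := by
    intro x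
    have : x ∈ M ⊔ N := by rw [hc.sup_eq_top]; trivial
    obtain ⟨m, hm, n, hn, e⟩ := Submodule.mem_sup.1 this
    exact ⟨⟨m, hm⟩, ⟨n, hn⟩, e⟩
  constructor
  · rw [injective_iff_map_eq_zero]
    intro x hx
    obtain ⟨m, n, rfl⟩ := split x
    rw [gz_alg_apply] at hx
    have e : z • (m : X) - T m = -(z • (n : X) - T n) := by
      rw [map_add, smul_add] at hx
      rw [eq_neg_iff_add_eq_zero, ← hx]; abel
    have hm : z • (m : X) - T m ∈ M := M.sub_mem (M.smul_mem _ m.2) (iM _ m.2)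
    have hn : z • (m : X) - T m ∈ N := by
      rw [e]
      exact N.neg_mem (N.sub_mem (N.smul_mem _ n.2) (iN _ n.2))
    have h0 := Submodule.disjoint_def.1 hc.disjoint _ hm hn
    have h0' : z • (n : X) - T n = 0 := by rw [h0] at e; exact neg_eq_zero.1 e.symm
    have m0 : m = 0 := by
      refine (injective_iff_map_eq_zero _).1 h1.1 m ?_
      ext
      rw [gz_alg_apply]
      simpa [gz_restrict_apply iM] using h0
    have n0 : n = 0 := by
      refine (injective_iff_map_eq_zero _).1 h2.1 n ?_
      ext
      rw [gz_alg_apply]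
      simpa [gz_restrict_apply iN] using h0'
    simp [m0, n0]
  · intro y
    obtain ⟨m, n, rfl⟩ := split y
    obtain ⟨m', rfl⟩ := h1.2 m
    obtain ⟨n', rfl⟩ := h2.2 n
    refine ⟨m' + n', ?_⟩
    simp only [gz_alg_apply, Submodule.coe_sub, Submodule.coe_smul, gz_restrict_apply iM,
      gz_restrict_apply iN, map_add]

/-- `0` is not an accumulation point of the accumulation points of the spectrum. -/
def GzLocal (S : Set ℂ) : Prop := ∃ ε > 0, ∀ z ∈ accSet S, ‖z‖ < ε → z = 0

theorem gz_local_of_inv {T : X →L[ℂ] X} (h : GzInvertible T) : GzLocal (spectrum ℂ T) := by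
  obtain ⟨M, N, hR, hb, hz⟩ := h
  have : CompleteSpace M := hR.1.completeSpace_coe
  obtain ⟨ε, hε, hsub⟩ := gz_spec_nhds (ContinuousLinearMap.isUnit_iff_bijective.2 hb)
  refine ⟨ε, hε, fun z hzacc hzε => ?_⟩
  have h1 := AccPt.nhds_inter hzacc
    (Metric.isOpen_ball.mem_nhds (by simpa using hzε : z ∈ Metric.ball (0:ℂ) ε))
  have h2 : AccPt z (Filter.principal (spectrum ℂ (restrictCLM T N))) := by
    refine h1.mono (principal_mono.2 ?_)
    rintro w ⟨hw1, hw2⟩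
    by_contra hw3
    exact gz_spec_union hR (hsub w (by simpa using hw1)) hw3 hw2
  have h3 : z ∈ ({0} : Set ℂ) := hz h2
  exact h3

theorem gz_gap {S : Set ℂ} (hS : IsCompact S) (h : GzLocal S) :
    ∃ r s : ℝ, 0 < r ∧ r < s ∧ (∀ z : ℂ, r ≤ ‖z‖ → ‖z‖ ≤ s → z ∉ S) ∧
      ∀ z ∈ accSet S, ‖z‖ ≤ r → z = 0 := by
  obtain ⟨ε, hε, hz⟩ := h
  set K : Set ℂ := S ∩ (norm ⁻¹' Icc (ε / 3) (ε / 2)) with hK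
  have hKc : IsCompact K := hS.inter_right (isClosed_Icc.preimage continuous_norm)
  have hfin : K.Finite := by
    by_contra hinf
    obtain ⟨x, hxK, hx⟩ := Set.Infinite.exists_accPt_of_subset_isCompact hinf hKc subset_rfl
    have hx' : x ∈ accSet S := hx.mono (principal_mono.2 inter_subset_left)
    have h1 : ε / 3 ≤ ‖x‖ := hxK.2.1
    have h2 : ‖x‖ ≤ ε / 2 := hxK.2.2
    have := hz x hx' (by linarith)
    subst this
    simp at h1
    linarith
  have hF : (norm '' K).Finite := hfin.image _
  obtain ⟨t, ht, htF⟩ := ((Ioo_infinite (by linarith : ε / 3 < ε / 2)).sdiff hF).nonempty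
  have hU : IsOpen (Ioo (ε / 3) (ε / 2) \ (norm '' K)) := isOpen_Ioo.sdiff hF.isClosed
  obtain ⟨δ, hδ, hsub⟩ := Metric.isOpen_iff.1 hU t ⟨ht, htF⟩
  have hball : ∀ y, t - δ / 2 ≤ y → y ≤ t + δ / 2 → y ∈ Ioo (ε / 3) (ε / 2) \ (norm '' K) := by
    intro y h1 h2
    apply hsub
    rw [Metric.mem_ball, Real.dist_eq, abs_lt]
    constructor <;> linarith
  have hlo := (hball (t - δ / 2) le_rfl (by linarith)).1
  refine ⟨t - δ / 2, t + δ / 2, by linarith [hlo.1], by linarith, fun z h1 h2 hzS => ?_,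
    fun z hzS h1 => hz z hzS (by linarith [hlo.2])⟩
  have h3 := hball _ h1 h2
  exact h3.2 ⟨z, ⟨hzS, h3.1.1.le, h3.1.2.le⟩, rfl⟩

theorem gz_inv_of_local {T : X →L[ℂ] X} (h : GzLocal (spectrum ℂ T)) : GzInvertible T := by
  obtain ⟨r, s, hr, hrs, hann, hacc⟩ := gz_gap (spectrum.isCompact T) h
  obtain ⟨P, B, hPP, hP, hB, h1P, C, hC⟩ := gz_riesz hr hrs hann
  have hPT : Commute P T := hP T (Commute.refl T)
  have hBT : Commute B T := hB T (Commute.refl T)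
  have hPB : Commute P B := hP B hBT.symm
  have app : ∀ {U V : X →L[ℂ] X}, Commute U V → ∀ x, U (V x) = V (U x) := by
    intro U V hUV x
    exact congrArg (fun W : X →L[ℂ] X => W x) hUV.eq
  have hPPx : ∀ x, P (P x) = P x := fun x => congrArg (fun W : X →L[ℂ] X => W x) hPP
  have h1Px : ∀ x, x - P x = T (B x) := fun x => congrArg (fun W : X →L[ℂ] X => W x) h1P
  set M : Submodule ℂ X := LinearMap.ker (P : X →ₗ[ℂ] X) with hM
  set N : Submodule ℂ X := LinearMap.ker ((1 - P : X →L[ℂ] X) : X →ₗ[ℂ] X) with hN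
  have memM : ∀ x, x ∈ M ↔ P x = 0 := fun x => Iff.rfl
  have memN : ∀ x, x ∈ N ↔ P x = x := fun x => by
    have : x ∈ N ↔ x - P x = 0 := Iff.rfl
    rw [this, sub_eq_zero, eq_comm]
  have iM : ∀ x ∈ M, T x ∈ M := by
    intro x hx
    rw [memM] at *
    rw [app hPT, hx, map_zero]
  have iNU : ∀ U : X →L[ℂ] X, Commute P U → ∀ x ∈ N, U x ∈ N := by
    intro U hU x hx
    rw [memN] at *
    rw [app hU, hx]
  have iN := iNU T hPT
  have cM : IsClosed (M : Set X) := P.isClosed_ker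
  have cN : IsClosed (N : Set X) := (1 - P : X →L[ℂ] X).isClosed_ker
  have : CompleteSpace N := cN.completeSpace_coe
  refine ⟨M, N, ⟨cM, cN, iM, iN, ?_, ?_⟩, ⟨?_, ?_⟩, ?_⟩
  · rw [Submodule.disjoint_def]
    intro x h1 h2
    rw [memM] at h1
    rw [memN] at h2
    rw [← h2, h1]
  · rw [codisjoint_iff, eq_top_iff]
    intro x _
    refine Submodule.mem_sup.2 ⟨x - P x, ?_, P x, ?_, by simp⟩
    · rw [memM, map_sub, hPPx, sub_self]
    · rw [memN, hPPx]
  · rw [injective_iff_map_eq_zero]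
    intro x hx
    have h2 : T x = 0 := by rw [← gz_restrict_apply iM, hx]; rfl
    have h3 := h1Px x
    rw [(memM _).1 x.2, sub_zero, ← app hBT, h2, map_zero] at h3
    exact Subtype.ext h3
  · intro y
    have hy := (memM _).1 y.2
    refine ⟨⟨B y, ?_⟩, ?_⟩
    · rw [memM, app hPB, hy, map_zero]
    · ext
      rw [gz_restrict_apply iM]
      show T (B y) = y
      rw [← h1Px, hy, sub_zero]
  · have sub1 : spectrum ℂ (restrictCLM T N) ⊆ spectrum ℂ T := by
      intro z hz
      by_contra hn
      have hu : IsUnit (algebraMap ℂ (X →L[ℂ] X) z - T) := by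
        simpa [spectrum, resolventSet] using hn
      obtain ⟨u, hu⟩ := hu
      have hPu : Commute P (u : X →L[ℂ] X) := by
        rw [hu]
        exact (show Commute (algebraMap ℂ (X →L[ℂ] X) z) P from Algebra.commutes z P).symm.sub_right hPT
      have hPv : Commute P ((u⁻¹ : (X →L[ℂ] X)ˣ) : X →L[ℂ] X) := hPu.units_inv_right
      have huv : ∀ x, u.1 (u⁻¹.1 x) = x := fun x => congrArg (fun W : X →L[ℂ] X => W x) u.mul_inv
      have hvu : ∀ x, u⁻¹.1 (u.1 x) = x := fun x => congrArg (fun W : X →L[ℂ] X => W x) u.inv_mul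
      have hux : ∀ x, u.1 x = z • x - T x := fun x => by rw [hu, gz_alg_apply]
      refine (gz_mem_spec_iff (restrictCLM T N) z).2 ⟨?_, ?_⟩ hz
      · rw [injective_iff_map_eq_zero]
        intro x hx
        have h2 : u.1 x = 0 := by
          rw [hux, ← gz_restrict_apply iN]
          rw [gz_alg_apply] at hx
          exact congrArg Subtype.val hx
        ext
        rw [← hvu x, h2, map_zero]; rfl
      · intro y
        refine ⟨⟨u⁻¹.1 y, iNU _ hPv _ y.2⟩, ?_⟩
        ext
        rw [gz_alg_apply]
        simp only [Submodule.coe_sub, Submodule.coe_smul, gz_restrict_apply iN]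
        rw [← hux, huv]
    have powN : ∀ (k : ℕ) (x : N), (((restrictCLM T N) ^ k) x : X) = (T ^ k) x := by
      intro k
      induction k with
      | zero => intro x; rfl
      | succ k ih =>
        intro x
        rw [pow_succ, pow_succ]
        show (((restrictCLM T N) ^ k) (restrictCLM T N x) : X) = (T ^ k) (T x)
        rw [ih, gz_restrict_apply iN]
    have C0 : 0 ≤ C := by simpa using (norm_nonneg _).trans (hC 0)
    have normN : ∀ k : ℕ, ‖(restrictCLM T N) ^ k‖ ≤ C * r ^ k := by
      intro k
      refine ContinuousLinearMap.opNorm_le_bound _ (by positivity) fun x => ?_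
      rw [show ‖((restrictCLM T N) ^ k) x‖ = ‖(((restrictCLM T N) ^ k) x : X)‖ from rfl, powN]
      have e : (T ^ k) (x : X) = (T ^ k * P) x := by
        show _ = (T ^ k) (P x)
        rw [(memN _).1 x.2]
      rw [e]
      exact ((T ^ k * P).le_opNorm x).trans (by gcongr; exacts [hC k, le_rfl])
    intro z hz
    have hzr : ‖z‖ ≤ r := gz_acc_norm (restrictCLM T N) hr normN z hz
    have hz' : AccPt z (Filter.principal (spectrum ℂ (restrictCLM T N))) := hz
    exact hacc z (hz'.mono (principal_mono.2 sub1)) hzr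

/-- The `g_z`-invertible spectrum is stable under commuting quasi-nilpotent perturbations. -/
theorem gz_spectrum_quasinilpotent_perturbation (T Q : X →L[ℂ] X)
    (hQ : QuasiNilpotent Q) (hcomm : T * Q = Q * T) :
    ∀ z : ℂ, GzInvertible (T - z • 1) ↔ GzInvertible (T + Q - z • 1) := by
  intro z
  have hc : Commute (T - z • 1) Q :=
    (show Commute T Q from hcomm).sub_left ((Commute.one_left Q).smul_left z)
  have e : T + Q - z • 1 = (T - z • 1) + Q := by abel
  have hs : spectrum ℂ (T + Q - z • 1) = spectrum ℂ (T - z • 1) := by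
    rw [e]
    exact gz_spec_add hQ hc
  constructor
  · intro h
    apply gz_inv_of_local
    rw [hs]
    exact gz_local_of_inv h
  · intro h
    apply gz_inv_of_local
    rw [← hs]
    exact gz_local_of_inv h
end
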